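/- Let P⁺ be a poset of type (b) with parameters m ≥ 3, n, n′ ≥ 0 and 1 ≤ i₁ < ⋯ < i_p ≤ m−1, set P = P⁺ ∖ {∞}, let k be a field and let R be the Hibi ring, i.e. the k-linear span inside k[T_x : x ∈ P] of the monomials T^ν = ∏_{x∈P} T_x^{ν(x)} with ν ∈ \overline{T}(P) (restricted to P). Let R′ be the k-linear span of {T^ν : ν ∈ \overline{T}(P), ν(z′₁) = ν(z_m)}. Then: (1) R′ is a k-subalgebra of R isomorphic as a k-algebra to a polynomial ring over k in #P − 1 variables; and (2) for each 1 ≤ h ≤ m−2, the k-linear span of {T^ν : ν ∈ T(P), ν(z′₁) − ν(z_m) = h} is a free R′-module of rank 1 generated by T^{ν_h}, where ν_h(x) = rank[x,∞] for x ∈ [z′₁,∞] ∖ {z_m} and ν_h(x) = rank[x,∞] + m − 1 − h otherwise. -/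

import Mathlib

/-- The rank of the interval `[x,y]`: the maximum length of a chain from `x` to `y`. -/
noncomputable def intervalRank {Q : Type*} [PartialOrder Q] (x y : Q) : ℕ :=
  sSup {n : ℕ | ∃ c : Fin (n + 1) → Q, StrictMono c ∧ c 0 = x ∧ c (Fin.last n) = y}

/-- The covering relations of a poset of type (b) with parameters
`m ≥ 3`, `n, n' ≥ 0` and `1 ≤ ι 0 < ⋯ < ι (p-1) ≤ m − 1` (1-based indices `i_j = ι j`). -/
def TypeBCovers {Q : Type*} (m n n' p : ℕ) (hm : 3 ≤ m)
    (z z' : Fin m → Q) (w : Fin (n + 1) → Q) (w' : Fin (n' + 1) → Q)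
    (ι : Fin p → ℕ) (a b : Q) : Prop :=
  (∃ i : Fin n, a = w i.castSucc ∧ b = w i.succ) ∨
  (∃ i : Fin n', a = w' i.castSucc ∧ b = w' i.succ) ∨
  (a = w (Fin.last n) ∧ b = z ⟨0, by omega⟩) ∨
  (a = w (Fin.last n) ∧ b = z' ⟨0, by omega⟩) ∨
  (∃ (i : ℕ) (h : i + 1 < m), a = z ⟨i, by omega⟩ ∧ b = z ⟨i + 1, h⟩) ∨
  (∃ (i : ℕ) (h : i + 1 < m), a = z' ⟨i, by omega⟩ ∧ b = z' ⟨i + 1, h⟩) ∨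
  (a = z ⟨m - 1, by omega⟩ ∧ b = w' 0) ∨
  (a = z' ⟨m - 1, by omega⟩ ∧ b = w' 0) ∨
  (a = z' ⟨0, by omega⟩ ∧ b = z ⟨m - 1, by omega⟩) ∨
  (∃ (j : Fin p) (a' b' : Fin m),
    (a' : ℕ) + 1 = ι j ∧ (b' : ℕ) = ι j ∧ a = z a' ∧ b = z' b')

/-- `ν ∈ T(P)` where `inf` plays the role of `∞` (the maximum of `P⁺`). -/
def IsTPAt {Q : Type*} [PartialOrder Q] (inf : Q) (ν : Q → ℕ) : Prop :=
  ν inf = 0 ∧ StrictAnti ν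

/-- `ν ∈ \overline{T}(P)` where `inf` plays the role of `∞`. -/
def IsTbarAt {Q : Type*} [PartialOrder Q] (inf : Q) (ν : Q → ℕ) : Prop :=
  ν inf = 0 ∧ Antitone ν

/-- The function `ν_h`: `ν_h(x) = rank[x,∞]` for `x ∈ [z'₁,∞] ∖ {z_m}` and
`ν_h(x) = rank[x,∞] + m − 1 − h` otherwise. -/
noncomputable def nuH {Q : Type*} [PartialOrder Q] [DecidableEq Q]
    [DecidableRel ((· ≤ ·) : Q → Q → Prop)]
    (m n' h : ℕ) (hm : 3 ≤ m) (z z' : Fin m → Q) (w' : Fin (n' + 1) → Q) : Q → ℕ :=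
  fun q =>
    if z' ⟨0, by omega⟩ ≤ q ∧ q ≠ z ⟨m - 1, by omega⟩ then
      intervalRank q (w' (Fin.last n'))
    else
      intervalRank q (w' (Fin.last n')) + (m - 1 - h)

/-- The monomial `T^ν = ∏_{x ∈ P} T_x^{ν(x)}` in `k[T_x : x ∈ P]`, where
`P = P⁺ ∖ {∞}` and `inf = ∞`. -/
noncomputable def hibiMonomial {Q : Type*} [Fintype Q] [DecidableEq Q]
    (k : Type*) [Field k] (inf : Q) (ν : Q → ℕ) :
    MvPolynomial {q : Q // q ≠ inf} k :=
  ∏ x : {q : Q // q ≠ inf}, (MvPolynomial.X x : MvPolynomial {q : Q // q ≠ inf} k) ^ ν x.1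


section Monomials

variable {Q : Type*} [Fintype Q] [DecidableEq Q] (k : Type*) [Field k]

theorem hibiMonomial_eq_monomial (inf : Q) (ν : Q → ℕ) :
    hibiMonomial k inf ν =
      MvPolynomial.monomial
        (Finsupp.equivFunOnFinite.symm fun x : {q : Q // q ≠ inf} => ν x.1) 1 := by
  rw [MvPolynomial.monomial_eq, Finsupp.prod_fintype _ _ fun _ => pow_zero _]
  simp [hibiMonomial]

theorem hibiMonomial_add (inf : Q) (μ ν : Q → ℕ) :
    hibiMonomial k inf (μ + ν) = hibiMonomial k inf μ * hibiMonomial k inf ν := by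
  simp [hibiMonomial, pow_add, Finset.prod_mul_distrib]

theorem hibiMonomial_ne_zero (inf : Q) (ν : Q → ℕ) : hibiMonomial k inf ν ≠ 0 := by
  simp [hibiMonomial_eq_monomial]

/-- An injective homomorphism between exponent monoids induces an isomorphism of the polynomial
ring onto the span of the monomials whose exponents lie in the range. -/
theorem exists_subalgebra_span_monomial_range {σ τ : Type*} (g : (τ →₀ ℕ) →+ (σ →₀ ℕ))
    (hg : Function.Injective g) :
    ∃ A : Subalgebra k (MvPolynomial σ k),
      Subalgebra.toSubmodule A =
        Submodule.span k (Set.range fun d => MvPolynomial.monomial (g d) (1 : k)) ∧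
      Nonempty (A ≃ₐ[k] MvPolynomial τ k) := by
  let φ : MvPolynomial τ k →ₐ[k] MvPolynomial σ k := AddMonoidAlgebra.mapDomainAlgHom k k g
  have hφ : Function.Injective φ := AddMonoidAlgebra.mapDomain_injective hg
  have hφm : ∀ d, φ (MvPolynomial.monomial d 1) = MvPolynomial.monomial (g d) 1 :=
    fun d => AddMonoidAlgebra.mapDomain_single
  refine ⟨φ.range, ?_, ⟨(AlgEquiv.ofInjective φ hφ).symm⟩⟩
  have hrange : Subalgebra.toSubmodule φ.range = Submodule.map φ.toLinearMap ⊤ := by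
    ext
    simp
  rw [hrange, ← (MvPolynomial.basisMonomials τ k).span_eq, Submodule.map_span, ← Set.range_comp]
  congr 2
  funext d
  simpa using hφm d

/-- The monomials of functions that factor antitonely through a surjective labelling
`Q → {0, …, N}` span a polynomial ring in `N` variables. -/
theorem exists_subalgebra_span_hibiMonomial_factor {inf : Q} {N : ℕ} (pos : Q → ℕ) (s : ℕ → Q)
    (hps : ∀ j ≤ N, pos (s j) = j) (hinf : pos inf = N) :
    ∃ A : Subalgebra k (MvPolynomial {q : Q // q ≠ inf} k),
      Subalgebra.toSubmodule A =
        Submodule.span k {f | ∃ ν : Q → ℕ,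
          (∃ c : ℕ → ℕ, Antitone c ∧ c N = 0 ∧ ∀ q, ν q = c (pos q)) ∧
          f = hibiMonomial k inf ν} ∧
      Nonempty (A ≃ₐ[k] MvPolynomial (Fin N) k) := by
  classical
  let tail (d : Fin N →₀ ℕ) (j : ℕ) : ℕ := ∑ i : Fin N, if j ≤ i then d i else 0
  have tail_top (d) : tail d N = 0 :=
    Finset.sum_eq_zero fun i _ => if_neg (by have := i.2; omega)
  have tail_succ (d : Fin N →₀ ℕ) (i : Fin N) : tail d i = d i + tail d (i + 1) := by
    have : ∀ l : Fin N, (if (i : ℕ) ≤ l then d l else 0) =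
        (if l = i then d l else 0) + (if (i : ℕ) + 1 ≤ l then d l else 0) := by
      intro l
      simp only [Fin.ext_iff]
      split_ifs <;> omega
    simp only [tail, this, Finset.sum_add_distrib]
    simp
  have tail_anti (d) : Antitone (tail d) := fun a b hab =>
    Finset.sum_le_sum fun i _ => by split_ifs <;> omega
  let g : (Fin N →₀ ℕ) →+ ({q : Q // q ≠ inf} →₀ ℕ) :=
    { toFun := fun d => Finsupp.equivFunOnFinite.symm fun x => tail d (pos x.1)
      map_zero' := by ext x; simp [tail]
      map_add' := fun d e => by
        ext x
        simp only [tail, Finsupp.equivFunOnFinite_symm_apply_apply, Finsupp.add_apply,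
          ← Finset.sum_add_distrib]
        exact Finset.sum_congr rfl fun i _ => by split_ifs <;> simp }
  have hg : Function.Injective g := by
    intro d e hde
    have key : ∀ j ≤ N, tail d j = tail e j := by
      intro j hj
      rcases hj.eq_or_lt with rfl | hlt
      · rw [tail_top, tail_top]
      · have hne : s j ≠ inf := fun h => by
          have := hps j hj
          rw [h, hinf] at this
          omega
        have := DFunLike.congr_fun hde ⟨s j, hne⟩
        simpa [g, hps j hj] using this
    ext i
    have h₁ := key i i.2.le
    have h₂ := key (i + 1) i.2
    rw [tail_succ, tail_succ e] at h₁
    omega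
  obtain ⟨A, hA, hiso⟩ := exists_subalgebra_span_monomial_range k g hg
  refine ⟨A, hA.trans (congrArg _ ?_), hiso⟩
  ext f
  constructor
  · rintro ⟨d, rfl⟩
    refine ⟨fun q => tail d (pos q), ⟨tail d, tail_anti d, tail_top d, fun _ => rfl⟩, ?_⟩
    rw [hibiMonomial_eq_monomial]
    rfl
  · rintro ⟨ν, ⟨c, hc, hcN, hν⟩, rfl⟩
    let d : Fin N →₀ ℕ := Finsupp.equivFunOnFinite.symm fun i => c i - c (i + 1)
    have htail : ∀ j, tail d j = c j := by
      intro j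
      by_cases hj : j ≤ N
      · induction hj using Nat.decreasingInduction with
        | of_succ j hj ih =>
          have h₁ := tail_succ d ⟨j, hj⟩
          have h₂ : d ⟨j, hj⟩ = c j - c (j + 1) := rfl
          have h₃ := hc (Nat.le_succ j)
          simp only [Nat.succ_eq_add_one] at h₁ h₃
          omega
        | self => rw [tail_top, hcN]
      · have h₁ := hc (not_le.1 hj).le
        have h₂ := tail_anti d (not_le.1 hj).le
        rw [tail_top] at h₂
        omega
    refine ⟨d, ?_⟩
    simp only [hibiMonomial_eq_monomial, hν]
    refine congrArg (fun e => MvPolynomial.monomial e (1 : k)) (Finsupp.ext fun x => ?_)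
    exact htail _

end Monomials

/-- In a poset, a strictly antitone function vanishing at `y` that drops by exactly one
along some step up from every other element computes the interval ranks below `y`. -/
theorem intervalRank_eq_of_strictAnti {Q : Type*} [PartialOrder Q] {y : Q} {r : Q → ℕ}
    (hr : StrictAnti r) (hy : r y = 0) (hstep : ∀ x, x ≠ y → ∃ x', x < x' ∧ r x = r x' + 1)
    (x : Q) : intervalRank x y = r x := by
  have hub : ∀ l ∈ {l : ℕ | ∃ c : Fin (l + 1) → Q, StrictMono c ∧ c 0 = x ∧ c (Fin.last l) = y},
      l ≤ r x := by
    rintro l ⟨c, hc, rfl, -⟩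
    have : ∀ i : Fin (l + 1), (i : ℕ) + r (c i) ≤ r (c 0) := by
      intro i
      induction i using Fin.induction with
      | zero => simp
      | succ i ih =>
        have := hr (hc i.castSucc_lt_succ)
        simp only [Fin.val_castSucc, Fin.val_succ] at *
        omega
    have := this (Fin.last l)
    simp only [Fin.val_last] at this
    omega
  have hmem : ∀ (l : ℕ) (x : Q), r x = l →
      ∃ c : Fin (l + 1) → Q, StrictMono c ∧ c 0 = x ∧ c (Fin.last l) = y := by
    intro l
    induction l with
    | zero =>
      intro x hx
      have hxy : x = y := by
        by_contra hne
        obtain ⟨x', -, h⟩ := hstep x hne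
        omega
      exact ⟨fun _ => x, fun a b hab => by omega, rfl, hxy⟩
    | succ l ih =>
      intro x hx
      obtain ⟨x', hlt, h⟩ := hstep x (by rintro rfl; omega)
      obtain ⟨c, hc, h0, hl⟩ := ih x' (by omega)
      refine ⟨Fin.cons x c, ?_, rfl, by rw [← Fin.succ_last, Fin.cons_succ, hl]⟩
      rw [Fin.strictMono_iff_lt_succ]
      intro i
      induction i using Fin.cases with
      | zero => simpa [h0] using hlt
      | succ i => simpa [← Fin.succ_castSucc] using hc i.castSucc_lt_succ
  exact le_antisymm (csSup_le ⟨_, hmem _ x rfl⟩ hub) (le_csSup ⟨_, hub⟩ (hmem _ x rfl))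

theorem strictAnti_of_forall_covBy {Q : Type*} [PartialOrder Q] [Finite Q] {F : Q → ℕ}
    (hF : ∀ a b, a ⋖ b → F b < F a) : StrictAnti F := by
  classical
  have := Fintype.ofFinite Q
  let _ : LocallyFiniteOrder Q := Fintype.toLocallyFiniteOrder
  exact (strictAnti_iff_forall_covBy F).2 hF

theorem monotone_of_forall_covBy {Q : Type*} [PartialOrder Q] [Finite Q] {F : Q → ℕ}
    (hF : ∀ a b, a ⋖ b → F a ≤ F b) : Monotone F := by
  classical
  have := Fintype.ofFinite Q
  let _ : LocallyFiniteOrder Q := Fintype.toLocallyFiniteOrder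
  exact (monotone_iff_forall_covBy F).2 hF

/-- The data of a poset of type (b). -/
structure IsTypeB {Q : Type*} [PartialOrder Q] (m n n' p : ℕ) (hm : 3 ≤ m)
    (z z' : Fin m → Q) (w : Fin (n + 1) → Q) (w' : Fin (n' + 1) → Q) (ι : Fin p → ℕ) : Prop where
  bijective : Function.Bijective
    (Sum.elim (Sum.elim z z') (Sum.elim w w') :
      (Fin m ⊕ Fin m) ⊕ (Fin (n + 1) ⊕ Fin (n' + 1)) → Q)
  covBy_iff : ∀ a b : Q, a ⋖ b ↔ TypeBCovers m n n' p hm z z' w w' ι a b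

namespace IsTypeB

variable {Q : Type*} [PartialOrder Q] {m n n' p : ℕ} {hm : 3 ≤ m}
  {z z' : Fin m → Q} {w : Fin (n + 1) → Q} {w' : Fin (n' + 1) → Q} {ι : Fin p → ℕ}

theorem exists_fun (H : IsTypeB m n n' p hm z z' w w' ι) {α : Type*}
    (fz fz' : Fin m → α) (fw : Fin (n + 1) → α) (fw' : Fin (n' + 1) → α) :
    ∃ F : Q → α, (∀ i, F (z i) = fz i) ∧ (∀ i, F (z' i) = fz' i) ∧
      (∀ i, F (w i) = fw i) ∧ ∀ i, F (w' i) = fw' i := by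
  let e := Equiv.ofBijective _ H.bijective
  refine ⟨Sum.elim (Sum.elim fz fz') (Sum.elim fw fw') ∘ e.symm, fun i => ?_, fun i => ?_,
    fun i => ?_, fun i => ?_⟩
  · simp [show e.symm (z i) = .inl (.inl i) from e.symm_apply_apply (.inl (.inl i))]
  · simp [show e.symm (z' i) = .inl (.inr i) from e.symm_apply_apply (.inl (.inr i))]
  · simp [show e.symm (w i) = .inr (.inl i) from e.symm_apply_apply (.inr (.inl i))]
  · simp [show e.symm (w' i) = .inr (.inr i) from e.symm_apply_apply (.inr (.inr i))]

theorem cases (H : IsTypeB m n n' p hm z z' w w' ι) (q : Q) :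
    (∃ i, q = z i) ∨ (∃ i, q = z' i) ∨ (∃ i, q = w i) ∨ ∃ i, q = w' i := by
  obtain ⟨((i | i) | (i | i)), rfl⟩ := H.bijective.2 q
  · exact .inl ⟨i, rfl⟩
  · exact .inr (.inl ⟨i, rfl⟩)
  · exact .inr (.inr (.inl ⟨i, rfl⟩))
  · exact .inr (.inr (.inr ⟨i, rfl⟩))

theorem w_lt (H : IsTypeB m n n' p hm z z' w w' ι) {i : ℕ} (hi : i < n) :
    w ⟨i, by omega⟩ < w ⟨i + 1, by omega⟩ :=
  ((H.covBy_iff _ _).2 (.inl ⟨⟨i, hi⟩, rfl, rfl⟩)).lt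

theorem w'_lt (H : IsTypeB m n n' p hm z z' w w' ι) {i : ℕ} (hi : i < n') :
    w' ⟨i, by omega⟩ < w' ⟨i + 1, by omega⟩ :=
  ((H.covBy_iff _ _).2 (.inr (.inl ⟨⟨i, hi⟩, rfl, rfl⟩))).lt

theorem w_lt_z (H : IsTypeB m n n' p hm z z' w w' ι) : w (Fin.last n) < z ⟨0, by omega⟩ :=
  ((H.covBy_iff _ _).2 (.inr (.inr (.inl ⟨rfl, rfl⟩)))).lt

theorem z_lt (H : IsTypeB m n n' p hm z z' w w' ι) {i : ℕ} (hi : i + 1 < m) :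
    z ⟨i, by omega⟩ < z ⟨i + 1, hi⟩ :=
  ((H.covBy_iff _ _).2 (.inr (.inr (.inr (.inr (.inl ⟨i, hi, rfl, rfl⟩)))))).lt

theorem z'_lt (H : IsTypeB m n n' p hm z z' w w' ι) {i : ℕ} (hi : i + 1 < m) :
    z' ⟨i, by omega⟩ < z' ⟨i + 1, hi⟩ :=
  ((H.covBy_iff _ _).2 (.inr (.inr (.inr (.inr (.inr (.inl ⟨i, hi, rfl, rfl⟩))))))).lt

theorem z_lt_w' (H : IsTypeB m n n' p hm z z' w w' ι) : z ⟨m - 1, by omega⟩ < w' 0 :=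
  ((H.covBy_iff _ _).2 (.inr (.inr (.inr (.inr (.inr (.inr (.inl ⟨rfl, rfl⟩)))))))).lt

theorem z'_lt_w' (H : IsTypeB m n n' p hm z z' w w' ι) : z' ⟨m - 1, by omega⟩ < w' 0 :=
  ((H.covBy_iff _ _).2 (.inr (.inr (.inr (.inr (.inr (.inr (.inr (.inl ⟨rfl, rfl⟩))))))))).lt

theorem z'_zero_le_z' (H : IsTypeB m n n' p hm z z' w w' ι) (i : ℕ) (hi : i < m) :
    z' ⟨0, by omega⟩ ≤ z' ⟨i, hi⟩ := by
  induction i with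
  | zero => exact le_rfl
  | succ i ih => exact (ih (by omega)).trans (H.z'_lt hi).le

theorem z'_zero_le_w' (H : IsTypeB m n n' p hm z z' w w' ι) (i : ℕ) (hi : i < n' + 1) :
    z' ⟨0, by omega⟩ ≤ w' ⟨i, hi⟩ := by
  induction i with
  | zero => exact (H.z'_zero_le_z' _ _).trans H.z'_lt_w'.le
  | succ i ih => exact (ih (by omega)).trans (H.w'_lt (by omega)).le

/-- A relation between the values of a function given by index formulas holds along all covers
once it holds along the covers listed in the definition of a poset of type (b). -/
theorem forall_covBy (H : IsTypeB m n n' p hm z z' w w' ι) {r : ℕ → ℕ → Prop} {F : Q → ℕ}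
    {fz fz' fw fw' : ℕ → ℕ} (hz : ∀ i, F (z i) = fz i) (hz' : ∀ i, F (z' i) = fz' i)
    (hw : ∀ i, F (w i) = fw i) (hw' : ∀ i, F (w' i) = fw' i)
    (h₁ : ∀ i < n, r (fw i) (fw (i + 1))) (h₂ : ∀ i < n', r (fw' i) (fw' (i + 1)))
    (h₃ : r (fw n) (fz 0)) (h₄ : r (fw n) (fz' 0))
    (h₅ : ∀ i, i + 1 < m → r (fz i) (fz (i + 1)))
    (h₆ : ∀ i, i + 1 < m → r (fz' i) (fz' (i + 1)))
    (h₇ : r (fz (m - 1)) (fw' 0)) (h₈ : r (fz' (m - 1)) (fw' 0))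
    (h₉ : r (fz' 0) (fz (m - 1))) (h₀ : ∀ i, i + 1 < m → r (fz i) (fz' (i + 1)))
    (a b : Q) (hab : a ⋖ b) : r (F a) (F b) := by
  rcases (H.covBy_iff a b).1 hab with ⟨i, rfl, rfl⟩ | ⟨i, rfl, rfl⟩ | ⟨rfl, rfl⟩ | ⟨rfl, rfl⟩ |
    ⟨i, hi, rfl, rfl⟩ | ⟨i, hi, rfl, rfl⟩ | ⟨rfl, rfl⟩ | ⟨rfl, rfl⟩ | ⟨rfl, rfl⟩ |
    ⟨j, a', b', ha, hb, rfl, rfl⟩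
  · simpa [hw] using h₁ i i.2
  · simpa [hw'] using h₂ i i.2
  · simpa [hw, hz] using h₃
  · simpa [hw, hz'] using h₄
  · simpa [hz] using h₅ i hi
  · simpa [hz'] using h₆ i hi
  · simpa [hz, hw'] using h₇
  · simpa [hz', hw'] using h₈
  · simpa [hz, hz'] using h₉
  · have hab' : (b' : ℕ) = a' + 1 := by omega
    rw [hz, hz', hab']
    exact h₀ _ (hab' ▸ b'.2)

section Finite

variable [Fintype Q]

/-- The interval ranks up to the maximum. -/
theorem intervalRank_eq (H : IsTypeB m n n' p hm z z' w w' ι) :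
    (∀ i, intervalRank (z i) (w' (Fin.last n')) = n' + m - i) ∧
    (∀ i, intervalRank (z' i) (w' (Fin.last n')) = n' + m - i) ∧
    (∀ i, intervalRank (w i) (w' (Fin.last n')) = n' + m + n + 1 - i) ∧
    ∀ i, intervalRank (w' i) (w' (Fin.last n')) = n' - i := by
  obtain ⟨r, hz, hz', hw, hw'⟩ := H.exists_fun (fun i => n' + m - i) (fun i => n' + m - i)
    (fun i => n' + m + n + 1 - i) (fun i => n' - i)
  have hr : StrictAnti r := by
    refine strictAnti_of_forall_covBy (H.forall_covBy (r := fun a b => b < a)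
      (fz := fun i => n' + m - i) (fz' := fun i => n' + m - i) (fw := fun i => n' + m + n + 1 - i)
      (fw' := fun i => n' - i) hz hz' hw hw' ?_ ?_ ?_ ?_ ?_ ?_ ?_ ?_ ?_ ?_) <;> intros <;> omega
  have key := intervalRank_eq_of_strictAnti (y := w' (Fin.last n')) hr (by simp [hw']) fun x hx => by
    rcases H.cases x with ⟨⟨i, hi⟩, rfl⟩ | ⟨⟨i, hi⟩, rfl⟩ | ⟨⟨i, hi⟩, rfl⟩ | ⟨⟨i, hi⟩, rfl⟩
    · rcases (show i = m - 1 ∨ i + 1 < m by omega) with rfl | hi'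
      · exact ⟨_, H.z_lt_w', by simp only [hz, hw', Fin.val_zero]; omega⟩
      · exact ⟨_, H.z_lt hi', by simp only [hz]; omega⟩
    · rcases (show i = m - 1 ∨ i + 1 < m by omega) with rfl | hi'
      · exact ⟨_, H.z'_lt_w', by simp only [hz', hw', Fin.val_zero]; omega⟩
      · exact ⟨_, H.z'_lt hi', by simp only [hz']; omega⟩
    · rcases (show i = n ∨ i < n by omega) with rfl | hi'
      · exact ⟨_, H.w_lt_z, by simp only [hz, hw]; omega⟩
      · exact ⟨_, H.w_lt hi', by simp only [hw]; omega⟩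
    · rcases (show i = n' ∨ i < n' by omega) with rfl | hi'
      · exact absurd rfl hx
      · exact ⟨_, H.w'_lt hi', by simp only [hw']; omega⟩
  simp only [key]
  exact ⟨hz, hz', hw, hw'⟩

theorem not_z'_zero_le (H : IsTypeB m n n' p hm z z' w w' ι) :
    (∀ i : Fin m, (i : ℕ) ≠ m - 1 → ¬ z' ⟨0, by omega⟩ ≤ z i) ∧
      ∀ i, ¬ z' ⟨0, by omega⟩ ≤ w i := by
  obtain ⟨r, hz, hz', hw, hw'⟩ := H.exists_fun (fun i => if (i : ℕ) = m - 1 then 1 else 0)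
    (fun _ => 1) (fun _ => 0) (fun _ => 1)
  have hr : Monotone r := by
    refine monotone_of_forall_covBy (H.forall_covBy (r := fun a b => a ≤ b)
      (fz := fun i => if i = m - 1 then 1 else 0) (fz' := fun _ => 1) (fw := fun _ => 0)
      (fw' := fun _ => 1) hz hz' hw hw' ?_ ?_ ?_ ?_ ?_ ?_ ?_ ?_ ?_ ?_) <;> intros <;>
      (try split_ifs) <;> omega
  refine ⟨fun i hi h => ?_, fun i h => ?_⟩
  · simpa [hz, hz', hi] using hr h
  · simpa [hw, hz'] using hr h

theorem nuH_eq [DecidableEq Q] [DecidableRel ((· ≤ ·) : Q → Q → Prop)]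
    (H : IsTypeB m n n' p hm z z' w w' ι) (h : ℕ) :
    (∀ i, nuH m n' h hm z z' w' (z i) = n' + m - i + (m - 1 - h)) ∧
    (∀ i, nuH m n' h hm z z' w' (z' i) = n' + m - i) ∧
    (∀ i, nuH m n' h hm z z' w' (w i) = n' + m + n + 1 - i + (m - 1 - h)) ∧
    ∀ i, nuH m n' h hm z z' w' (w' i) = n' - i := by
  obtain ⟨rank_z, rank_z', rank_w, rank_w'⟩ := H.intervalRank_eq
  obtain ⟨nz, nw⟩ := H.not_z'_zero_le
  have inj := H.bijective.1
  refine ⟨fun i => ?_, fun i => ?_, fun i => ?_, fun i => ?_⟩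
  · rw [nuH, if_neg, rank_z]
    rintro ⟨h₁, h₂⟩
    exact nz i (fun hi => h₂ (congrArg z (Fin.ext hi))) h₁
  · have hne : z' i ≠ z ⟨m - 1, by omega⟩ := fun e =>
      absurd (@inj (.inl (.inr i)) (.inl (.inl ⟨m - 1, by omega⟩)) e) (by simp)
    rw [nuH, if_pos ⟨H.z'_zero_le_z' i i.2, hne⟩, rank_z']
  · rw [nuH, if_neg fun h => nw i h.1, rank_w]
  · have hne : w' i ≠ z ⟨m - 1, by omega⟩ := fun e =>
      absurd (@inj (.inr (.inr i)) (.inl (.inl ⟨m - 1, by omega⟩)) e) (by simp)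
    rw [nuH, if_pos ⟨H.z'_zero_le_w' i i.2, hne⟩, rank_w']

theorem nuH_isTPAt [DecidableEq Q] [DecidableRel ((· ≤ ·) : Q → Q → Prop)]
    (H : IsTypeB m n n' p hm z z' w w' ι) {h : ℕ} (h1 : 1 ≤ h) :
    IsTPAt (w' (Fin.last n')) (nuH m n' h hm z z' w') := by
  obtain ⟨hz, hz', hw, hw'⟩ := H.nuH_eq h
  refine ⟨by simp [hw'], strictAnti_of_forall_covBy (H.forall_covBy (r := fun a b => b < a)
    (fz := fun i => n' + m - i + (m - 1 - h)) (fz' := fun i => n' + m - i)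
    (fw := fun i => n' + m + n + 1 - i + (m - 1 - h)) (fw' := fun i => n' - i) hz hz' hw hw'
    ?_ ?_ ?_ ?_ ?_ ?_ ?_ ?_ ?_ ?_)⟩ <;> intros <;> omega

/-- The elements other than `z'₁` enumerated as
`w₀, …, w_n, z₁, …, z_m, z'₂, …, z'_m, w'₀, …, w'_{n'}`, together with the position in this
enumeration, where `z'₁` gets the position of `z_m`. -/
theorem exists_pos_enumeration (H : IsTypeB m n n' p hm z z' w w' ι) :
    ∃ (pos : Q → ℕ) (s : ℕ → Q), Monotone pos ∧
      pos (w' (Fin.last n')) = 2 * m + n + n' ∧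
      (∀ q, pos q ≤ 2 * m + n + n') ∧
      (∀ j ≤ 2 * m + n + n', pos (s j) = j) ∧
      pos (z' ⟨0, by omega⟩) = n + m ∧ s (n + m) = z ⟨m - 1, by omega⟩ ∧
      (∀ q, q ≠ z' ⟨0, by omega⟩ → s (pos q) = q) ∧
      (∀ i (hi : i < n + 1), s i = w ⟨i, hi⟩) ∧
      (∀ i (hi : i < m), s (n + 1 + i) = z ⟨i, hi⟩) ∧
      (∀ i (hi : i + 1 < m), s (n + m + 1 + i) = z' ⟨i + 1, hi⟩) ∧
      ∀ i (hi : i < n' + 1), s (2 * m + n + i) = w' ⟨i, hi⟩ := by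
  obtain ⟨pos, hz, hz', hw, hw'⟩ := H.exists_fun (fun i => n + 1 + i) (fun i => n + m + i)
    (fun i => (i : ℕ)) (fun i => 2 * m + n + i)
  let s : ℕ → Q := fun j =>
    if h₁ : j < n + 1 then w ⟨j, h₁⟩
    else if h₂ : j < n + 1 + m then z ⟨j - (n + 1), by omega⟩
    else if h₃ : j < n + 2 * m then z' ⟨j - (n + m), by omega⟩
    else w' ⟨min (j - (2 * m + n)) n', by omega⟩
  have sw : ∀ i (hi : i < n + 1), s i = w ⟨i, hi⟩ := fun i hi => dif_pos hi
  have sz : ∀ i (hi : i < m), s (n + 1 + i) = z ⟨i, hi⟩ := by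
    intro i hi
    simp only [s]
    rw [dif_neg (by omega), dif_pos (by omega)]
    congr
    omega
  have sz' : ∀ i (hi : i + 1 < m), s (n + m + 1 + i) = z' ⟨i + 1, hi⟩ := by
    intro i hi
    simp only [s]
    rw [dif_neg (by omega), dif_neg (by omega), dif_pos (by omega)]
    congr 2
    omega
  have sw' : ∀ i (hi : i < n' + 1), s (2 * m + n + i) = w' ⟨i, hi⟩ := by
    intro i hi
    simp only [s]
    rw [dif_neg (by omega), dif_neg (by omega), dif_neg (by omega)]
    congr 2
    omega
  refine ⟨pos, s, ?_, by simp [hw'], ?_, ?_, by simp [hz'], ?_, ?_, sw, sz, sz', sw'⟩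
  · refine monotone_of_forall_covBy (H.forall_covBy (r := fun a b => a ≤ b)
      (fz := fun i => n + 1 + i) (fz' := fun i => n + m + i) (fw := fun i => i)
      (fw' := fun i => 2 * m + n + i) hz hz' hw hw' ?_ ?_ ?_ ?_ ?_ ?_ ?_ ?_ ?_ ?_) <;>
      intros <;> omega
  · intro q
    rcases H.cases q with ⟨⟨i, hi⟩, rfl⟩ | ⟨⟨i, hi⟩, rfl⟩ | ⟨⟨i, hi⟩, rfl⟩ | ⟨⟨i, hi⟩, rfl⟩ <;>
      simp only [hz, hz', hw, hw'] <;> omega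
  · intro j hj
    simp only [s]
    split_ifs <;> simp only [hz, hz', hw, hw'] <;> omega
  · rw [← sz]
    congr 1
    omega
  · intro q hq
    rcases H.cases q with ⟨⟨i, hi⟩, rfl⟩ | ⟨⟨i, hi⟩, rfl⟩ | ⟨⟨i, hi⟩, rfl⟩ | ⟨⟨i, hi⟩, rfl⟩
    · rw [hz, sz]
    · rcases i with _ | i
      · exact absurd rfl hq
      · rw [hz', ← sz']
        congr 1
        simp only
        omega
    · rw [hw, sw]
    · exact (congrArg s (hw' _)).trans (sw' i hi)

/-- Consecutive elements of the enumeration are strictly increasing, with `nuH` dropping by at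
most one, except for the step from `z_m` to `z'₂`. -/
theorem exists_enumeration [DecidableEq Q] [DecidableRel ((· ≤ ·) : Q → Q → Prop)]
    (H : IsTypeB m n n' p hm z z' w w' ι) :
    ∃ (pos : Q → ℕ) (s : ℕ → Q), Monotone pos ∧
      pos (w' (Fin.last n')) = 2 * m + n + n' ∧
      (∀ q, pos q ≤ 2 * m + n + n') ∧
      (∀ j ≤ 2 * m + n + n', pos (s j) = j) ∧
      pos (z' ⟨0, by omega⟩) = n + m ∧ s (n + m) = z ⟨m - 1, by omega⟩ ∧
      s (n + m + 1) = z' ⟨1, by omega⟩ ∧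
      (∀ q, q ≠ z' ⟨0, by omega⟩ → s (pos q) = q) ∧
      ∀ j < 2 * m + n + n', j ≠ n + m → s j < s (j + 1) ∧
        ∀ h, nuH m n' h hm z z' w' (s j) ≤ nuH m n' h hm z z' w' (s (j + 1)) + 1 := by
  obtain ⟨pos, s, hmono, hinf, hle, hps, hz0, hszm, hsp, sw, sz, sz', sw'⟩ :=
    H.exists_pos_enumeration
  refine ⟨pos, s, hmono, hinf, hle, hps, hz0, hszm, sz' 0 (by omega), hsp, fun j hj hne => ?_⟩
  have step : ∀ a b, s j = a → s (j + 1) = b → a < b →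
      (∀ h, nuH m n' h hm z z' w' a ≤ nuH m n' h hm z z' w' b + 1) →
      s j < s (j + 1) ∧
        ∀ h, nuH m n' h hm z z' w' (s j) ≤ nuH m n' h hm z z' w' (s (j + 1)) + 1 := by
    rintro a b rfl rfl hab hh
    exact ⟨hab, hh⟩
  rcases lt_trichotomy j n with h | rfl | h
  · refine step _ _ (sw j (by omega)) (sw (j + 1) (by omega)) (H.w_lt h) fun h => ?_
    simp only [(H.nuH_eq h).2.2.1]
    omega
  · refine step _ _ (sw j (by omega)) (sz 0 (by omega)) H.w_lt_z fun h => ?_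
    simp only [(H.nuH_eq h).2.2.1, (H.nuH_eq h).1]
    omega
  by_cases h₁ : j < n + m
  · obtain ⟨i, rfl⟩ := Nat.exists_eq_add_of_le (show n + 1 ≤ j by omega)
    refine step _ _ (sz i (by omega)) (sz (i + 1) (by omega)) (H.z_lt _) fun h => ?_
    simp only [(H.nuH_eq h).1]
    omega
  by_cases h₂ : j < 2 * m + n
  · obtain ⟨i, rfl⟩ := Nat.exists_eq_add_of_le (show n + m + 1 ≤ j by omega)
    rcases (show i + 2 = m ∨ i + 2 < m by omega) with hi | hi
    · refine step _ _ (sz' i (by omega)) ((congrArg s (by omega)).trans (sw' 0 (by omega))) ?_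
        fun h => ?_
      · rw [show (⟨i + 1, by omega⟩ : Fin m) = ⟨m - 1, by omega⟩ from Fin.ext (by simp only; omega)]
        exact H.z'_lt_w'
      · simp only [(H.nuH_eq h).2.1, (H.nuH_eq h).2.2.2]
        omega
    · refine step _ _ (sz' i (by omega)) (sz' (i + 1) (by omega)) (H.z'_lt _) fun h => ?_
      simp only [(H.nuH_eq h).2.1]
      omega
  · obtain ⟨i, rfl⟩ := Nat.exists_eq_add_of_le (show 2 * m + n ≤ j by omega)
    refine step _ _ (sw' i (by omega)) (sw' (i + 1) (by omega)) (H.w'_lt (by omega)) fun h => ?_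
    simp only [(H.nuH_eq h).2.2.2]
    omega

/-- The functions in `T̄(P)` with equal values at `z'₁` and `z_m` are those factoring antitonely
through a labelling by `0, …, 2m + n + n'`, and every function in `T(P)` whose values at `z'₁` and
`z_m` differ by `h` is the sum of `ν_h` and such a function. -/
theorem exists_factorization [DecidableEq Q] [DecidableRel ((· ≤ ·) : Q → Q → Prop)]
    (H : IsTypeB m n n' p hm z z' w w' ι) :
    ∃ (pos : Q → ℕ) (s : ℕ → Q), pos (w' (Fin.last n')) = 2 * m + n + n' ∧
      (∀ j ≤ 2 * m + n + n', pos (s j) = j) ∧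
      (∀ ν : Q → ℕ, (IsTbarAt (w' (Fin.last n')) ν ∧
          ν (z' ⟨0, by omega⟩) = ν (z ⟨m - 1, by omega⟩)) ↔
        ∃ c : ℕ → ℕ, Antitone c ∧ c (2 * m + n + n') = 0 ∧ ∀ q, ν q = c (pos q)) ∧
      ∀ h, 1 ≤ h → h ≤ m - 2 → ∀ ν : Q → ℕ, IsTPAt (w' (Fin.last n')) ν →
        ν (z' ⟨0, by omega⟩) = ν (z ⟨m - 1, by omega⟩) + h →
        ∃ μ : Q → ℕ, IsTbarAt (w' (Fin.last n')) μ ∧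
          μ (z' ⟨0, by omega⟩) = μ (z ⟨m - 1, by omega⟩) ∧
          ν = nuH m n' h hm z z' w' + μ := by
  obtain ⟨pos, s, hmono, hinf, hle, hps, hz0, hszm, hsz1, hsp, hstep⟩ := H.exists_enumeration
  have hposm : pos (z ⟨m - 1, by omega⟩) = n + m := by rw [← hszm, hps _ (by omega)]
  have hsN : s (2 * m + n + n') = w' (Fin.last n') := by
    rw [← hinf]
    refine hsp _ fun e => ?_
    rw [e, hz0] at hinf
    omega
  have factor (ν : Q → ℕ) (h0 : ν (w' (Fin.last n')) = 0)
      (heq : ν (z' ⟨0, by omega⟩) = ν (z ⟨m - 1, by omega⟩))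
      (hν : ∀ j < 2 * m + n + n', ν (s (j + 1)) ≤ ν (s j)) :
      ∃ c : ℕ → ℕ, Antitone c ∧ c (2 * m + n + n') = 0 ∧ ∀ q, ν q = c (pos q) := by
    refine ⟨fun j => ν (s (min j (2 * m + n + n'))), antitone_nat_of_succ_le fun j => ?_, ?_,
      fun q => ?_⟩
    · rcases lt_or_ge j (2 * m + n + n') with hj | hj
      · rw [min_eq_left hj, min_eq_left hj.le]
        exact hν j hj
      · rw [min_eq_right hj, min_eq_right (by omega)]
    · simp only [min_self, hsN, h0]
    · simp only [min_eq_left (hle q)]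
      by_cases hq : q = z' ⟨0, by omega⟩
      · rw [hq, hz0, hszm, heq]
      · rw [hsp q hq]
  have of_factor (ν : Q → ℕ)
      (hν : ∃ c : ℕ → ℕ, Antitone c ∧ c (2 * m + n + n') = 0 ∧ ∀ q, ν q = c (pos q)) :
      IsTbarAt (w' (Fin.last n')) ν ∧ ν (z' ⟨0, by omega⟩) = ν (z ⟨m - 1, by omega⟩) := by
    obtain ⟨c, hc, hcN, hν⟩ := hν
    refine ⟨⟨by rw [hν, hinf, hcN], fun a b hab => ?_⟩, by rw [hν, hν, hz0, hposm]⟩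
    rw [hν, hν]
    exact hc (hmono hab)
  have hz01 : z' ⟨0, by omega⟩ < z' ⟨1, by omega⟩ := H.z'_lt (i := 0) (by omega)
  refine ⟨pos, s, hinf, hps, fun ν => ⟨fun ⟨hν, heq⟩ => ?_, of_factor ν⟩,
    fun h h1 h2 ν hν hνh => ?_⟩
  · refine factor ν hν.1 heq fun j hj => ?_
    by_cases hjm : j = n + m
    · rw [hjm, hszm, hsz1, ← heq]
      exact hν.2 hz01.le
    · exact hν.2 (hstep j hj hjm).1.le
  · set νh := nuH m n' h hm z z' w' with hνh_def
    have hνh_top : νh (w' (Fin.last n')) = 0 := (H.nuH_isTPAt h1).1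
    have hνh_z0 : νh (z' ⟨0, by omega⟩) = νh (z ⟨m - 1, by omega⟩) + h := by
      rw [hνh_def, (H.nuH_eq h).1, (H.nuH_eq h).2.1]
      simp only
      omega
    have hνh_z1 : νh (z' ⟨0, by omega⟩) = νh (z' ⟨1, by omega⟩) + 1 := by
      rw [hνh_def, (H.nuH_eq h).2.1, (H.nuH_eq h).2.1]
      simp only
      omega
    have drop : ∀ j < 2 * m + n + n', ν (s (j + 1)) + νh (s j) ≤ ν (s j) + νh (s (j + 1)) := by
      intro j hj
      by_cases hjm : j = n + m
      · have := hν.2 hz01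
        rw [hjm, hszm, hsz1]
        omega
      · have h₁ := hν.2 (hstep j hj hjm).1
        have h₂ := (hstep j hj hjm).2 h
        rw [← hνh_def] at h₂
        omega
    have les : ∀ j ≤ 2 * m + n + n', νh (s j) ≤ ν (s j) := by
      intro j hj
      induction hj using Nat.decreasingInduction with
      | of_succ j hj ih =>
        have := drop j hj
        omega
      | self => rw [hsN, hνh_top, hν.1]
    have lezm := les (n + m) (by omega)
    rw [hszm] at lezm
    have le : ∀ q, νh q ≤ ν q := by
      intro q
      by_cases hq : q = z' ⟨0, by omega⟩
      · rw [hq]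
        omega
      · rw [← hsp q hq]
        exact les _ (hle q)
    obtain ⟨hμ, heq⟩ := of_factor (fun q => ν q - νh q)
      (factor _ (by simp [hν.1]) (by omega) fun j hj => by
        have := drop j hj
        omega)
    exact ⟨_, hμ, heq, funext fun q => (Nat.add_sub_cancel' (le q)).symm⟩

end Finite

end IsTypeB

/-- for a poset of type (b), (1) the span `R'` of the monomials `T^ν`
with `ν ∈ \overline{T}(P)` and `ν(z'₁) = ν(z_m)` is a `k`-subalgebra of the Hibi
ring `R` isomorphic to a polynomial ring in `#P − 1` variables, and (2) for
`1 ≤ h ≤ m − 2` the span of the monomials `T^ν` with `ν ∈ T(P)` and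
`ν(z'₁) − ν(z_m) = h` is a free `R'`-module of rank 1 generated by `T^{ν_h}`. -/
theorem typeB_hibi_subalgebra_and_free_components
    {Q : Type*} [Fintype Q] [PartialOrder Q] [DecidableEq Q]
    [DecidableRel ((· ≤ ·) : Q → Q → Prop)]
    {k : Type*} [Field k]
    (m n n' p : ℕ) (hm : 3 ≤ m)
    (z z' : Fin m → Q) (w : Fin (n + 1) → Q) (w' : Fin (n' + 1) → Q)
    (ι : Fin p → ℕ)
    (hι₁ : ∀ j, 1 ≤ ι j) (hι₂ : ∀ j, ι j ≤ m - 1) (hιmono : StrictMono ι)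
    (hbij : Function.Bijective
      (Sum.elim (Sum.elim z z') (Sum.elim w w') :
        (Fin m ⊕ Fin m) ⊕ (Fin (n + 1) ⊕ Fin (n' + 1)) → Q))
    (hcov : ∀ a b : Q, a ⋖ b ↔ TypeBCovers m n n' p hm z z' w w' ι a b)
    (hbot : ∀ q : Q, w 0 ≤ q)
    (htop : ∀ q : Q, q ≤ w' (Fin.last n')) :
    (∃ A : Subalgebra k (MvPolynomial {q : Q // q ≠ w' (Fin.last n')} k),
      Subalgebra.toSubmodule A =
        Submodule.span k
          {f | ∃ ν : Q → ℕ, IsTbarAt (w' (Fin.last n')) ν ∧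
            ν (z' ⟨0, by omega⟩) = ν (z ⟨m - 1, by omega⟩) ∧
            f = hibiMonomial k (w' (Fin.last n')) ν} ∧
      Submodule.span k
          {f | ∃ ν : Q → ℕ, IsTbarAt (w' (Fin.last n')) ν ∧
            ν (z' ⟨0, by omega⟩) = ν (z ⟨m - 1, by omega⟩) ∧
            f = hibiMonomial k (w' (Fin.last n')) ν} ≤
        Submodule.span k
          {f | ∃ ν : Q → ℕ, IsTbarAt (w' (Fin.last n')) ν ∧
            f = hibiMonomial k (w' (Fin.last n')) ν} ∧
      Nonempty (A ≃ₐ[k]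
        MvPolynomial (Fin (Fintype.card {q : Q // q ≠ w' (Fin.last n')} - 1)) k)) ∧
    (∀ h : ℕ, 1 ≤ h → h ≤ m - 2 →
      Submodule.span k
          {f | ∃ ν : Q → ℕ, IsTPAt (w' (Fin.last n')) ν ∧
            (ν (z' ⟨0, by omega⟩) : ℤ) - (ν (z ⟨m - 1, by omega⟩) : ℤ) = h ∧
            f = hibiMonomial k (w' (Fin.last n')) ν} =
        (Submodule.span k
          {f | ∃ ν : Q → ℕ, IsTbarAt (w' (Fin.last n')) ν ∧
            ν (z' ⟨0, by omega⟩) = ν (z ⟨m - 1, by omega⟩) ∧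
            f = hibiMonomial k (w' (Fin.last n')) ν}).map
          (LinearMap.mulLeft k
            (hibiMonomial k (w' (Fin.last n')) (nuH m n' h hm z z' w'))) ∧
      ∀ f ∈ Submodule.span k
          {f | ∃ ν : Q → ℕ, IsTbarAt (w' (Fin.last n')) ν ∧
            ν (z' ⟨0, by omega⟩) = ν (z ⟨m - 1, by omega⟩) ∧
            f = hibiMonomial k (w' (Fin.last n')) ν},
        hibiMonomial k (w' (Fin.last n')) (nuH m n' h hm z z' w') * f = 0 → f = 0) := by
  have H : IsTypeB m n n' p hm z z' w w' ι := ⟨hbij, hcov⟩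
  obtain ⟨pos, s, hinf, hps, hiff, hsum⟩ := H.exists_factorization
  have hcard : Fintype.card {q : Q // q ≠ w' (Fin.last n')} - 1 = 2 * m + n + n' := by
    have h₁ := Fintype.card_of_bijective hbij
    have h₂ : Fintype.card {q : Q // q ≠ w' (Fin.last n')} = Fintype.card Q - 1 := by
      simp [Fintype.card_subtype_compl]
    simp only [Fintype.card_sum, Fintype.card_fin] at h₁
    omega
  refine ⟨?_, fun h h1 h2 => ⟨?_, fun f _ hf => ?_⟩⟩
  · rw [hcard]
    obtain ⟨A, hA, hiso⟩ := exists_subalgebra_span_hibiMonomial_factor k pos s hps hinf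
    refine ⟨A, ?_, ?_, hiso⟩
    · simpa only [← hiff, and_assoc] using hA
    · exact Submodule.span_mono fun f ⟨ν, hν, _, hf⟩ => ⟨ν, hν, hf⟩
  · rw [Submodule.map_span]
    congr 1
    ext f
    constructor
    · rintro ⟨ν, hν, hνh, rfl⟩
      obtain ⟨μ, hμ, heq, rfl⟩ := hsum h h1 h2 ν hν (by omega)
      exact ⟨_, ⟨μ, hμ, heq, rfl⟩, (hibiMonomial_add k _ _ _).symm⟩
    · rintro ⟨_, ⟨μ, hμ, heq, rfl⟩, rfl⟩
      have hνh := H.nuH_isTPAt h1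
      refine ⟨nuH m n' h hm z z' w' + μ, ⟨?_, fun a b hab => ?_⟩, ?_,
        (hibiMonomial_add k _ _ _).symm⟩
      · simp [hνh.1, hμ.1]
      · exact add_lt_add_of_lt_of_le (hνh.2 hab) (hμ.2 hab.le)
      · simp only [Pi.add_apply, (H.nuH_eq h).1, (H.nuH_eq h).2.1, heq]
        omega
  · exact (mul_eq_zero.1 hf).resolve_left (hibiMonomial_ne_zero k _ _)
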